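/- arXiv:1110.1713 — 2 statements merged into one kernel-verified Lean document; each statement's English description precedes it below -/
import Mathlib

section
/- The function g(x₁,x₂,a) = log|x₁| on G satisfies ‖g‖_{BMO} = ‖h‖_{BMO(ℝ)}, where h(s) = log|s| and ‖h‖_{BMO(ℝ)} = sup over bounded intervals Q ⊂ ℝ of |Q|⁻¹∫_Q |h − h_Q| ds (h_Q being the mean of h over Q); in particular ‖g‖_{BMO} < ∞. -/
open MeasureTheory Real Filter Set
open scoped ENNReal

noncomputable section

/-- The group `G = ℝ² ⋊ ℝ⁺`, realized as triples `(x₁, x₂, a)` (only `a > 0` is relevant). -/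
abbrev G : Type := ℝ × ℝ × ℝ

/-- Group product `(x₁,x₂,a)·(x₁',x₂',a') = (x₁+a x₁', x₂+a x₂', a a')`. -/
def gMul (x y : G) : G := (x.1 + x.2.2 * y.1, x.2.1 + x.2.2 * y.2.1, x.2.2 * y.2.2)

/-- Group inverse `(x₁,x₂,a)⁻¹ = (−x₁/a, −x₂/a, 1/a)`. -/
def gInv (x : G) : G := (-x.1 / x.2.2, -x.2.1 / x.2.2, 1 / x.2.2)

/-- The identity `e = (0,0,1)`. -/
def gE : G := (0, 0, 1)

/-- The right Haar measure `dρ = a⁻¹ dx₁ dx₂ da` (supported where `a > 0`). -/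
def ρG : Measure G :=
  (volume : Measure G).withDensity fun x => ENNReal.ofReal (if 0 < x.2.2 then x.2.2⁻¹ else 0)

/-- The modular function `δ(x₁,x₂,a) = a⁻²`. -/
def deltaG (x : G) : ℝ := (x.2.2 ^ 2)⁻¹

/-- `|x| = √(x₁² + x₂²)`. -/
def normG (x : G) : ℝ := Real.sqrt (x.1 ^ 2 + x.2.1 ^ 2)

/-- `cosh r(x) = (a + a⁻¹ + a⁻¹|x|²)/2`. -/
def coshArg (x : G) : ℝ := (x.2.2 + x.2.2⁻¹ + x.2.2⁻¹ * (x.1 ^ 2 + x.2.1 ^ 2)) / 2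

/-- `r(x) ≥ 0` is determined by `cosh r(x) = coshArg x`; explicitly `r = arcosh (coshArg x)`. -/
def rG (x : G) : ℝ := Real.log (coshArg x + Real.sqrt (coshArg x ^ 2 - 1))

/-- The left-invariant distance `d(x,y) = r(x⁻¹y)`. -/
def dG (x y : G) : ℝ := rG (gMul (gInv x) y)

/-- The heat kernel
`p_t(x) = (8π^{3/2})⁻¹ δ(x)^{1/2} (r(x)/sinh r(x)) t^{−3/2} exp(−r(x)²/(4t))`,
with `r/sinh r := 1` at `x = e`. -/
def heatK (t : ℝ) (x : G) : ℝ :=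
  (8 * Real.pi ^ ((3 : ℝ)/2))⁻¹ * Real.sqrt (deltaG x) *
    (if rG x = 0 then 1 else rG x / Real.sinh (rG x)) *
    t ^ (-(3 : ℝ)/2) * Real.exp (-(rG x ^ 2) / (4 * t))

/-- Convolution `f ∗ p_t(x) = ∫ f(xy⁻¹) p_t(y) dρ(y)`. -/
def convHeat (f : G → ℝ) (t : ℝ) (x : G) : ℝ := ∫ y, f (gMul x (gInv y)) * heatK t y ∂ρG

/-- The heat maximal operator `Mf(x) = sup_{t>0} |f ∗ p_t(x)|` (valued in `ℝ≥0∞`). -/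
def maxHeat (f : G → ℝ) (x : G) : ℝ≥0∞ :=
  ⨆ (t : ℝ) (_ : 0 < t), ENNReal.ofReal |convHeat f t x|

/-- Calderón–Zygmund sets. -/
def IsCZ (R : Set G) : Prop :=
  ∃ c : G, ∃ L r : ℝ, 0 < c.2.2 ∧ 0 < L ∧ 0 < r ∧
    R = Set.Icc (c.1 - L/2) (c.1 + L/2) ×ˢ
        (Set.Icc (c.2.1 - L/2) (c.2.1 + L/2) ×ˢ
         Set.Icc (c.2.2 * Real.exp (-r)) (c.2.2 * Real.exp r)) ∧
    (r < 1 → Real.exp 2 * c.2.2 * r ≤ L ∧ L < Real.exp 8 * c.2.2 * r) ∧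
    (1 ≤ r → c.2.2 * Real.exp (2*r) ≤ L ∧ L < c.2.2 * Real.exp (8*r))

/-- Atoms: `A ∈ L¹(ρ)` supported in a Calderón–Zygmund set `R`, with
`‖A‖_∞ ≤ ρ(R)⁻¹` and `∫ A dρ = 0`. -/
def IsAtomG (A : G → ℝ) : Prop :=
  Integrable A ρG ∧
  ∃ R : Set G, IsCZ R ∧ (∀ x ∉ R, A x = 0) ∧
    eLpNorm A ⊤ ρG ≤ (ρG R)⁻¹ ∧
    ∫ x, A x ∂ρG = 0

/-- `f = Σ_j lam_j A_j` with atoms `A_j`, `Σ_j |lam_j| < ∞`, converging in `L¹(ρ)`. -/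
def IsH1Decomp (f : G → ℝ) (lam : ℕ → ℝ) (A : ℕ → G → ℝ) : Prop :=
  (∀ j, IsAtomG (A j)) ∧ Summable (fun j => |lam j|) ∧
  Tendsto (fun N => eLpNorm (fun x => f x - ∑ j ∈ Finset.range N, lam j * A j x) 1 ρG)
    atTop (nhds 0)

/-- The Hardy space `H¹`. -/
def MemH1 (f : G → ℝ) : Prop :=
  Integrable f ρG ∧ ∃ lam A, IsH1Decomp f lam A

/-- `‖f‖_{H¹} = inf Σ_j |lam_j|` over all atomic decompositions. -/
def H1norm (f : G → ℝ) : ℝ :=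
  sInf {s | ∃ lam A, IsH1Decomp f lam A ∧ s = ∑' j, |lam j|}

/-- The left-invariant vector field `X₀ = a ∂_a`. -/
def X0 (f : G → ℝ) (x : G) : ℝ := x.2.2 * deriv (fun s => f (x.1, x.2.1, s)) x.2.2

/-- The left-invariant vector field `X₁ = a ∂_{x₁}`. -/
def X1 (f : G → ℝ) (x : G) : ℝ := x.2.2 * deriv (fun s => f (s, x.2.1, x.2.2)) x.1

/-- The left-invariant vector field `X₂ = a ∂_{x₂}`. -/
def X2 (f : G → ℝ) (x : G) : ℝ := x.2.2 * deriv (fun s => f (x.1, s, x.2.2)) x.2.1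

/-- `‖∇p_t(x)‖`, the Euclidean norm of `(X₀p_t, X₁p_t, X₂p_t)` at `x`. -/
def gradHeatNorm (t : ℝ) (x : G) : ℝ :=
  Real.sqrt (X0 (heatK t) x ^ 2 + X1 (heatK t) x ^ 2 + X2 (heatK t) x ^ 2)

/-- The Poisson kernel `q_t(x) = π⁻² δ(x)^{1/2} (r(x)/sinh r(x)) · t/(t²+r(x)²)²`. -/
def poissonK (t : ℝ) (x : G) : ℝ :=
  (Real.pi ^ 2)⁻¹ * Real.sqrt (deltaG x) *
    (if rG x = 0 then 1 else rG x / Real.sinh (rG x)) *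
    (t / (t ^ 2 + rG x ^ 2) ^ 2)

/-- Convolution `f ∗ q_t(x) = ∫ f(xy⁻¹) q_t(y) dρ(y)`. -/
def convPoisson (f : G → ℝ) (t : ℝ) (x : G) : ℝ := ∫ y, f (gMul x (gInv y)) * poissonK t y ∂ρG

/-- The Poisson maximal operator `M̃f(x) = sup_{t>0} |f ∗ q_t(x)|`. -/
def maxPoisson (f : G → ℝ) (x : G) : ℝ≥0∞ :=
  ⨆ (t : ℝ) (_ : 0 < t), ENNReal.ofReal |convPoisson f t x|

/-- `G_{r₁}(x) = sup_{z ∈ B(x,r₁/2)} sup_{t>0} ‖∇p_t(z)‖`. -/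
def Gsup (r1 : ℝ) (x : G) : ℝ≥0∞ :=
  ⨆ (z : G) (_ : 0 < z.2.2 ∧ dG x z < r1 / 2) (t : ℝ) (_ : 0 < t),
    ENNReal.ofReal (gradHeatNorm t z)

/-- `R₀ = [−1,1]×[−1,1]×[e⁻¹,e]`. -/
def R0set : Set G :=
  Set.Icc (-1 : ℝ) 1 ×ˢ (Set.Icc (-1 : ℝ) 1 ×ˢ Set.Icc (Real.exp (-1)) (Real.exp 1))

/-- `R_L = [L−1,L+1]×[−1,1]×[e⁻¹,e]`. -/
def RLset (L : ℝ) : Set G :=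
  Set.Icc (L - 1) (L + 1) ×ˢ (Set.Icc (-1 : ℝ) 1 ×ˢ Set.Icc (Real.exp (-1)) (Real.exp 1))

/-- `f_L = χ_{R_L} − χ_{R₀}`. -/
def fL (L : ℝ) : G → ℝ := fun x =>
  (RLset L).indicator (fun _ => (1 : ℝ)) x - R0set.indicator (fun _ => (1 : ℝ)) x

/-- The mean of `g` over `R` with respect to `ρ`. -/
def czMean (g : G → ℝ) (R : Set G) : ℝ := (∫ x in R, g x ∂ρG) / (ρG R).toReal

/-- `‖g‖_{BMO} = sup_R ρ(R)⁻¹ ∫_R |g − g_R| dρ` over Calderón–Zygmund sets `R`. -/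
def czBMO (g : G → ℝ) : ℝ≥0∞ :=
  ⨆ (R : Set G) (_ : IsCZ R),
    (ρG R)⁻¹ * ∫⁻ x in R, ENNReal.ofReal |g x - czMean g R| ∂ρG

/-- `‖h‖_{BMO(ℝ)} = sup_Q |Q|⁻¹ ∫_Q |h − h_Q|` over bounded intervals `Q ⊂ ℝ`. -/
def lineBMO (h : ℝ → ℝ) : ℝ≥0∞ :=
  ⨆ (a : ℝ) (b : ℝ) (_ : a < b),
    (ENNReal.ofReal (b - a))⁻¹ *
      ∫⁻ s in Set.Icc a b, ENNReal.ofReal |h s - (∫ u in Set.Icc a b, h u) / (b - a)|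

/-- `2R₀ = [−2,2]×[−2,2]×[e⁻²,e²]`. -/
def twoR0set : Set G :=
  Set.Icc (-2 : ℝ) 2 ×ˢ (Set.Icc (-2 : ℝ) 2 ×ˢ Set.Icc (Real.exp (-2)) (Real.exp 2))

/-- The set `{x₁ > 3, |x₂| < 1, e⁻¹ < a < e}`. -/
def domSpecial : Set G :=
  {x : G | 3 < x.1 ∧ |x.2.1| < 1 ∧ Real.exp (-1) < x.2.2 ∧ x.2.2 < Real.exp 1}

/-- The function equal to `1/(x₁ (log x₁)^{3/2})` on `{x₁ > 3, |x₂| < 1, e⁻¹ < a < e}`,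
to `c₀` on `R₀`, and `0` elsewhere. -/
def fSpecial (c0 : ℝ) : G → ℝ := fun x =>
  domSpecial.indicator (fun y => (y.1 * Real.log y.1 ^ ((3 : ℝ)/2))⁻¹) x
    + R0set.indicator (fun _ => c0) x

/-!
The mean oscillation of a function with respect to a finite measure does not change when the
measure is multiplied by a constant. Since `ρG` is the product of three one-dimensional measures,
its restriction to a box projects, under `x ↦ x.1`, to a multiple of Lebesgue measure on the first
side of the box. Hence a function of `x.1` oscillates on a Calderón–Zygmund set exactly as it does
on the first side, and every bounded interval is the first side of some Calderón–Zygmund set.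

For `log |s|` on `[a, b]` put `M = max |a| |b|`. Up to a factor `2` the oscillation is at most the
mean of `log M - log |s| ≥ 0`, which is explicit and bounded because `t * log (M / t) ≤ M - t`.
-/

section MeanOscillation

variable {α β E : Type*} [MeasurableSpace α] [MeasurableSpace β]
  [NormedAddCommGroup E] [NormedSpace ℝ E] {μ : Measure α}

/-- The mean oscillation of `f` with respect to `μ`, i.e. the `μ`-average of the distance from `f`
to its own `μ`-average. Oscillation over a set `s` is obtained by restricting `μ` to `s`. -/
def meanOscillation (μ : Measure α) (f : α → E) : ℝ≥0∞ :=
  ⨍⁻ x, ‖f x - ⨍ y, f y ∂μ‖ₑ ∂μ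

lemma meanOscillation_smul_measure {c : ℝ≥0∞} (hc₀ : c ≠ 0) (hc : c ≠ ⊤) (f : α → E) :
    meanOscillation (c • μ) f = meanOscillation μ f := by
  have normalized_eq : ((c • μ) univ)⁻¹ • c • μ = (μ univ)⁻¹ • μ := by
    rw [smul_smul, Measure.smul_apply, smul_eq_mul,
      ENNReal.mul_inv (Or.inl hc₀) (Or.inl hc), mul_right_comm, ENNReal.inv_mul_cancel hc₀ hc,
      one_mul]
  simp only [meanOscillation, laverage_eq', average_eq', normalized_eq]

lemma meanOscillation_map {φ : α → β} (hφ : AEMeasurable φ μ) {f : β → E}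
    (hf : AEStronglyMeasurable f (μ.map φ)) :
    meanOscillation (μ.map φ) f = meanOscillation μ (f ∘ φ) := by
  have mass_eq : μ.map φ univ = μ univ := by
    rw [Measure.map_apply_of_aemeasurable hφ MeasurableSet.univ, preimage_univ]
  have average_eq : ⨍ y, f y ∂μ.map φ = ⨍ x, f (φ x) ∂μ := by
    rw [MeasureTheory.average_eq, MeasureTheory.average_eq, measureReal_def, measureReal_def,
      mass_eq, integral_map hφ hf]
  simp only [meanOscillation, average_eq, laverage_eq, mass_eq, Function.comp_apply]
  exact congrArg (· / μ univ) (lintegral_map' (hf.sub aestronglyMeasurable_const).enorm hφ)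

lemma meanOscillation_prod_comp_fst {ν : Measure β} [IsFiniteMeasure ν] [NeZero ν] {f : α → E}
    (hf : AEStronglyMeasurable f μ) :
    meanOscillation (μ.prod ν) (fun x => f x.1) = meanOscillation μ f := by
  have map_fst : (μ.prod ν).map Prod.fst = ν univ • μ := Measure.map_fst_prod
  have hf_map : AEStronglyMeasurable f ((μ.prod ν).map Prod.fst) := map_fst ▸ hf.smul_measure _
  calc meanOscillation (μ.prod ν) (f ∘ Prod.fst)
      = meanOscillation (ν univ • μ) f := by
        rw [← map_fst, meanOscillation_map measurable_fst.aemeasurable hf_map]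
    _ = meanOscillation μ f :=
        meanOscillation_smul_measure (NeZero.ne _) (measure_ne_top ν univ) f

lemma meanOscillation_le_two_mul_laverage [IsFiniteMeasure μ] [CompleteSpace E] {f : α → E}
    (hf : Integrable f μ) (c : E) :
    meanOscillation μ f ≤ 2 * ⨍⁻ x, ‖f x - c‖ₑ ∂μ := by
  rcases eq_zero_or_neZero μ with rfl | _
  · simp [meanOscillation]
  have average_sub_const : ⨍ x, (f x - c) ∂μ = (⨍ x, f x ∂μ) - c := by
    rw [average, integral_sub hf.to_average (integrable_const c)]
    exact congrArg _ (average_const μ c)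
  have enorm_sub_average_le : ‖c - ⨍ x, f x ∂μ‖ₑ ≤ ⨍⁻ x, ‖f x - c‖ₑ ∂μ := by
    rw [← enorm_neg, neg_sub, ← average_sub_const]
    exact enorm_integral_le_lintegral_enorm _
  calc meanOscillation μ f
      ≤ ⨍⁻ x, (‖f x - c‖ₑ + ‖c - ⨍ y, f y ∂μ‖ₑ) ∂μ := by
        refine laverage_mono_ae (Eventually.of_forall fun x => ?_)
        simpa only [sub_add_sub_cancel] using enorm_add_le (f x - c) (c - ⨍ y, f y ∂μ)
    _ = (⨍⁻ x, ‖f x - c‖ₑ ∂μ) + ‖c - ⨍ y, f y ∂μ‖ₑ := by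
        rw [laverage, lintegral_add_right _ measurable_const]
        exact congrArg _ (laverage_const μ _)
    _ ≤ 2 * ⨍⁻ x, ‖f x - c‖ₑ ∂μ := by
        rw [two_mul]
        gcongr

end MeanOscillation

lemma lineBMO_eq_iSup_meanOscillation (h : ℝ → ℝ) :
    lineBMO h =
      ⨆ (a : ℝ) (b : ℝ) (_ : a < b), meanOscillation (volume.restrict (Icc a b)) h := by
  refine iSup_congr fun a => iSup_congr fun b => iSup_congr fun hab => ?_
  rw [meanOscillation, setLAverage_eq, setAverage_eq, Real.volume_Icc,
    Real.volume_real_Icc_of_le hab.le, ENNReal.div_eq_inv_mul, smul_eq_mul, inv_mul_eq_div]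
  simp only [Real.enorm_eq_ofReal_abs]

lemma czBMO_eq_iSup_meanOscillation (g : G → ℝ) :
    czBMO g = ⨆ (R : Set G) (_ : IsCZ R), meanOscillation (ρG.restrict R) g := by
  refine iSup_congr fun R => iSup_congr fun _ => ?_
  rw [meanOscillation, setLAverage_eq, setAverage_eq, ENNReal.div_eq_inv_mul, smul_eq_mul,
    inv_mul_eq_div]
  simp only [Real.enorm_eq_ofReal_abs, czMean, measureReal_def]

/-- The Haar measure `da / a` of the multiplicative group `(0, ∞)`, extended by zero to `ℝ`. -/
def haarPos : Measure ℝ :=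
  volume.withDensity fun a => ENNReal.ofReal (if 0 < a then a⁻¹ else 0)

lemma measurable_haarPos_density :
    Measurable fun a : ℝ => ENNReal.ofReal (if 0 < a then a⁻¹ else 0) :=
  (Measurable.ite measurableSet_Ioi measurable_inv measurable_const).ennreal_ofReal

instance : SFinite haarPos := by
  unfold haarPos
  infer_instance

lemma haarPos_Icc {u v : ℝ} (hu : 0 < u) (huv : u ≤ v) :
    haarPos (Icc u v) = ENNReal.ofReal (log (v / u)) := by
  have pos_of_mem : ∀ a ∈ Icc u v, 0 < a := fun a ha => hu.trans_le ha.1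
  have integrable_inv : IntegrableOn (fun a : ℝ => a⁻¹) (Icc u v) :=
    (continuousOn_inv₀.mono fun a ha => (pos_of_mem a ha).ne').integrableOn_Icc
  calc haarPos (Icc u v)
      = ∫⁻ a in Icc u v, ENNReal.ofReal a⁻¹ := by
        rw [haarPos, withDensity_apply _ measurableSet_Icc]
        exact setLIntegral_congr_fun measurableSet_Icc fun a ha => by
          simp only [if_pos (pos_of_mem a ha)]
    _ = ENNReal.ofReal (∫ a in Icc u v, a⁻¹) :=
        (ofReal_integral_eq_lintegral_ofReal integrable_inv
          (ae_restrict_of_forall_mem measurableSet_Icc fun a ha =>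
            (inv_pos.2 (pos_of_mem a ha)).le)).symm
    _ = ENNReal.ofReal (log (v / u)) := by
        rw [integral_Icc_eq_integral_Ioc, ← intervalIntegral.integral_of_le huv,
          integral_inv_of_pos hu (hu.trans_le huv)]

lemma ρG_eq_prod : ρG = volume.prod (volume.prod haarPos) := by
  rw [haarPos, prod_withDensity_right measurable_haarPos_density]
  exact (prod_withDensity_right (measurable_haarPos_density.comp measurable_snd)).symm

lemma meanOscillation_ρG_restrict_box {h : ℝ → ℝ} {s : Set ℝ} {p q u v : ℝ}
    (hh : AEStronglyMeasurable h (volume.restrict s)) (hpq : p < q) (hu : 0 < u) (huv : u < v) :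
    meanOscillation (ρG.restrict (s ×ˢ (Icc p q ×ˢ Icc u v))) (fun x => h x.1) =
      meanOscillation (volume.restrict s) h := by
  set fiber : Measure (ℝ × ℝ) := (volume.prod haarPos).restrict (Icc p q ×ˢ Icc u v)
  have fiber_mass :
      fiber univ = ENNReal.ofReal (q - p) * ENNReal.ofReal (log (v / u)) := by
    rw [Measure.restrict_apply_univ, Measure.prod_prod, Real.volume_Icc, haarPos_Icc hu huv.le]
  have : IsFiniteMeasure fiber := ⟨by rw [fiber_mass]; finiteness⟩
  have : NeZero fiber := ⟨fun fiber_zero => by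
    have : 0 < log (v / u) := log_pos ((one_lt_div hu).2 huv)
    simp [fiber_zero, hpq.not_ge, this.not_ge] at fiber_mass⟩
  rw [ρG_eq_prod, ← Measure.prod_restrict]
  exact meanOscillation_prod_comp_fst hh

lemma isCZ_Icc_prod_of_lt {a b : ℝ} (hab : a < b) :
    IsCZ (Icc a b ×ˢ (Icc a b ×ˢ
      Icc ((b - a) * exp (-2) * exp (-1)) ((b - a) * exp (-2) * exp 1))) := by
  have hL : 0 < b - a := sub_pos.2 hab
  refine ⟨((a + b) / 2, (a + b) / 2, (b - a) * exp (-2)), b - a, 1, by positivity, hL, one_pos,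
    ?_, fun h => absurd h (lt_irrefl 1), fun _ => ⟨?_, ?_⟩⟩
  · have left_eq : (a + b) / 2 - (b - a) / 2 = a := by ring
    have right_eq : (a + b) / 2 + (b - a) / 2 = b := by ring
    simp only [left_eq, right_eq]
  · simp [mul_assoc, ← exp_add]
  · have one_lt : 1 < exp (-2 + 8 * 1) := one_lt_exp_iff.2 (by norm_num)
    simpa only [mul_assoc, ← exp_add] using lt_mul_of_one_lt_right hL one_lt

theorem czBMO_comp_fst {h : ℝ → ℝ} (hh : AEStronglyMeasurable h) :
    czBMO (fun x => h x.1) = lineBMO h := by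
  rw [czBMO_eq_iSup_meanOscillation, lineBMO_eq_iSup_meanOscillation]
  apply le_antisymm
  · refine iSup₂_le ?_
    rintro _ ⟨c, L, r, hc, hL, hr, rfl, -, -⟩
    rw [meanOscillation_ρG_restrict_box hh.restrict (by linarith) (by positivity)
      (by gcongr; linarith)]
    exact le_iSup₂_of_le _ _ (le_iSup_of_le (by linarith) le_rfl)
  · refine iSup₂_le fun a b => iSup_le fun hab => ?_
    have : 0 < b - a := sub_pos.2 hab
    refine le_iSup₂_of_le _ (isCZ_Icc_prod_of_lt hab) ?_
    rw [meanOscillation_ρG_restrict_box hh.restrict hab (by positivity) (by gcongr; norm_num)]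

lemma mul_log_sub_log_le_add {t M : ℝ} (ht : |t| ≤ M) : t * (log M - log t) ≤ M + t := by
  have hM : 0 ≤ M + t := neg_le_iff_add_nonneg'.1 (abs_le.1 ht).1
  rcases lt_trichotomy t 0 with neg | rfl | pos
  · have log_le : log t ≤ log M := log_abs t ▸ log_le_log (abs_pos.2 neg.ne) ht
    exact (mul_nonpos_of_nonpos_of_nonneg neg.le (sub_nonneg.2 log_le)).trans hM
  · simpa using ht
  · have hM_pos : 0 < M := pos.trans_le ((le_abs_self t).trans ht)
    calc t * (log M - log t) = t * log (M / t) := by rw [log_div hM_pos.ne' pos.ne']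
      _ ≤ t * (M / t - 1) := by gcongr; exact log_le_sub_one_of_pos (by positivity)
      _ = M - t := by field_simp
      _ ≤ M + t := by linarith

lemma integral_log_max_abs_sub_log_le {a b : ℝ} (hab : a ≤ b) :
    ∫ s in a..b, (log (max |a| |b|) - log s) ≤ 2 * (b - a) := by
  have integral_eq (M : ℝ) :
      ∫ s in a..b, (log M - log s) = b * (log M - log b) - a * (log M - log a) + (b - a) := by
    rw [intervalIntegral.integral_sub intervalIntegrable_const
      intervalIntegral.intervalIntegrable_log', intervalIntegral.integral_const, integral_log,
      smul_eq_mul]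
    ring
  -- An endpoint `x` of maximal modulus contributes `x * (log |x| - log x) = 0`.
  rcases le_total 0 (a + b) with h | h
  · have ha : |a| ≤ b := abs_le.2 ⟨by linarith, hab⟩
    have max_eq : max |a| |b| = b := by
      rw [abs_of_nonneg ((abs_nonneg a).trans ha), max_eq_right ha]
    have left_term_le := mul_log_sub_log_le_add (t := -a) (M := b) (by rwa [abs_neg])
    rw [log_neg_eq_log] at left_term_le
    rw [integral_eq, max_eq]
    linarith
  · have hb : |b| ≤ -a := abs_le.2 ⟨by linarith, by linarith⟩
    have max_eq : max |a| |b| = -a := by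
      rw [abs_of_nonpos (neg_nonneg.1 ((abs_nonneg b).trans hb)), max_eq_left hb]
    have right_term_le := mul_log_sub_log_le_add hb
    rw [log_neg_eq_log] at right_term_le
    rw [integral_eq, max_eq, log_neg_eq_log]
    linarith

lemma setAverage_log_max_abs_sub_log_le {a b : ℝ} (hab : a < b) :
    ⨍ s in Icc a b, (log (max |a| |b|) - log s) ≤ 2 := by
  rw [setAverage_eq, Real.volume_real_Icc_of_le hab.le, integral_Icc_eq_integral_Ioc,
    ← intervalIntegral.integral_of_le hab.le, smul_eq_mul, inv_mul_le_iff₀ (sub_pos.2 hab),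
    mul_comm]
  exact integral_log_max_abs_sub_log_le hab.le

lemma integrableOn_log_Icc (a b : ℝ) : IntegrableOn log (Icc a b) :=
  ((intervalIntegrable_iff' (by finiteness)).1
    intervalIntegral.intervalIntegrable_log').mono_set Icc_subset_uIcc

lemma ae_log_le_log_max_abs (a b : ℝ) :
    ∀ᵐ s ∂volume.restrict (Icc a b), log s ≤ log (max |a| |b|) := by
  filter_upwards [ae_restrict_of_ae (Measure.ae_ne volume 0),
    ae_restrict_mem measurableSet_Icc] with s hs_ne hs
  rw [← log_abs s]
  exact log_le_log (abs_pos.2 hs_ne) (abs_le_max_abs_abs hs.1 hs.2)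

lemma meanOscillation_log_Icc_le {a b : ℝ} (hab : a < b) :
    meanOscillation (volume.restrict (Icc a b)) log ≤ 4 := by
  set M := max |a| |b|
  have integrable_log := integrableOn_log_Icc a b
  have integrable_sub : IntegrableOn (fun s => log M - log s) (Icc a b) :=
    (integrable_const _).sub integrable_log
  have nonneg : ∀ᵐ s ∂volume.restrict (Icc a b), 0 ≤ log M - log s :=
    (ae_log_le_log_max_abs a b).mono fun s => sub_nonneg.2
  calc meanOscillation (volume.restrict (Icc a b)) log
      ≤ 2 * ⨍⁻ s in Icc a b, ‖log s - log M‖ₑ ∂volume :=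
        meanOscillation_le_two_mul_laverage integrable_log (log M)
    _ = 2 * ⨍⁻ s in Icc a b, ENNReal.ofReal (log M - log s) ∂volume := by
        congr 1
        refine laverage_congr (nonneg.mono fun s hs => ?_)
        simp only [Real.enorm_eq_ofReal_abs]
        rw [abs_sub_comm, abs_of_nonneg hs]
    _ = 2 * ENNReal.ofReal (⨍ s in Icc a b, (log M - log s)) := by
        rw [ofReal_setAverage integrable_sub nonneg, setLAverage_eq]
    _ ≤ 2 * ENNReal.ofReal 2 := by
        gcongr
        exact setAverage_log_max_abs_sub_log_le hab
    _ = 4 := by norm_num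

lemma lineBMO_log_abs_lt_top : lineBMO (fun s => log |s|) < ⊤ := by
  simp only [log_abs]
  rw [lineBMO_eq_iSup_meanOscillation]
  exact (iSup₂_le fun a b => iSup_le meanOscillation_log_Icc_le).trans_lt ENNReal.ofNat_lt_top

theorem log_abs_BMO :
    czBMO (fun x : G => Real.log |x.1|) = lineBMO (fun s : ℝ => Real.log |s|) ∧
    czBMO (fun x : G => Real.log |x.1|) < ⊤ := by
  have czBMO_eq : czBMO (fun x : G => log |x.1|) = lineBMO (fun s : ℝ => log |s|) :=
    czBMO_comp_fst (h := fun s => log |s|)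
      (by fun_prop : Measurable fun s : ℝ => log |s|).aestronglyMeasurable
  exact ⟨czBMO_eq, czBMO_eq.trans_lt lineBMO_log_abs_lt_top⟩
end
end

section
/- Let R₀ = [−1,1]×[−1,1]×[e⁻¹,e] and 2R₀ = [−2,2]×[−2,2]×[e⁻²,e²]. There exists a constant C > 0 such that for every x ∈ G with x ∉ 2R₀, the heat maximal function of χ_{R₀} satisfies M χ_{R₀}(x) ≤ C δ(x)^{1/2} / (r(x)² sinh r(x)). -/
open MeasureTheory Real Filter Set
open scoped ENNReal

noncomputable section

/-!
If `w = x y⁻¹` lies in `R₀`, then `x = w y`, and by left invariance `r(y) = d(w, x)`. Two facts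
control `p_t(y)` for all these `y` at once. First, `r` is subadditive on `G` (this is the
Cauchy–Schwarz inequality in the hyperboloid model) and bounded on `R₀`, so `r(x) ≤ r(y) + D`.
Second, `x ∉ 2R₀` keeps `r(y)` away from `0`, so an additive error in the radius costs only a
constant factor in `r² sinh r`. Optimizing the Gaussian factor in `t` gives
`p_t(y) ≤ δ(y)^{1/2} / (r(y)² sinh r(y))`, and the comparison of radii turns the right-hand side
into the desired function of `x`. It remains to integrate over the translate `R₀⁻¹ x`, whose
measure is bounded independently of `x` because `ρ` is right invariant.
-/

section RealEstimates

lemma rpow_neg_mul_exp_neg_div_le {α s t : ℝ} (hα : 0 < α) (hs : 0 < s) (ht : 0 < t) :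
    t ^ (-α) * exp (-s / t) ≤ (α / s) ^ α := by
  have hexp : (s / (α * t)) ^ α ≤ exp (s / t) :=
    calc (s / (α * t)) ^ α ≤ exp (s / (α * t)) ^ α := by
          gcongr
          linarith [add_one_le_exp (s / (α * t))]
      _ = exp (s / t) := by
          rw [← exp_mul]
          congr 1
          field_simp
  have hsplit : t ^ (-α) = (α / s) ^ α * (s / (α * t)) ^ α := by
    rw [← mul_rpow (by positivity) (by positivity), rpow_neg ht.le, ← inv_rpow ht.le]
    congr 1
    field_simp
  calc t ^ (-α) * exp (-s / t) = (α / s) ^ α * ((s / (α * t)) ^ α * exp (-s / t)) := by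
        rw [hsplit, mul_assoc]
    _ ≤ (α / s) ^ α * (exp (s / t) * exp (-s / t)) := by gcongr
    _ = (α / s) ^ α := by rw [← exp_add, neg_div, add_neg_cancel, exp_zero, mul_one]

-- The left-hand side is the heat kernel of `ℝ³` at distance `r`: `8 π^{3/2} = (4π)^{3/2}`.
lemma gaussian_three_le_inv_cube {r t : ℝ} (ht : 0 < t) (hr : 0 < r) :
    (8 * π ^ ((3 : ℝ) / 2))⁻¹ * t ^ (-(3 : ℝ) / 2) * exp (-(r ^ 2) / (4 * t)) ≤ (r ^ 3)⁻¹ := by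
  have hfactor : (8 * π ^ ((3 : ℝ) / 2))⁻¹ * t ^ (-(3 : ℝ) / 2) =
      (4 * π * t) ^ (-((3 : ℝ) / 2)) := by
    have hfour : (8 : ℝ) = 4 ^ ((3 : ℝ) / 2) := by
      rw [show (4 : ℝ) = 2 ^ (2 : ℝ) by norm_num, ← rpow_mul (by norm_num)]
      norm_num
    rw [hfour, ← mul_rpow (by norm_num) pi_pos.le, ← rpow_neg (by positivity), neg_div,
      ← mul_rpow (by positivity) ht.le]
  have hexponent : -(r ^ 2) / (4 * t) = -(π * r ^ 2) / (4 * π * t) := by field_simp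
  calc (8 * π ^ ((3 : ℝ) / 2))⁻¹ * t ^ (-(3 : ℝ) / 2) * exp (-(r ^ 2) / (4 * t))
      ≤ (3 / 2 / (π * r ^ 2)) ^ ((3 : ℝ) / 2) := by
        rw [hfactor, hexponent]
        exact rpow_neg_mul_exp_neg_div_le (by norm_num) (by positivity) (by positivity)
    _ ≤ ((r ^ 2)⁻¹) ^ ((3 : ℝ) / 2) := by
        gcongr
        field_simp
        linarith [pi_gt_three]
    _ = (r ^ 3)⁻¹ := by
        rw [inv_rpow (by positivity), ← rpow_natCast r 2, ← rpow_mul hr.le, ← rpow_natCast r 3]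
        norm_num

lemma sinh_add_mul_sinh_le {D ε q : ℝ} (hD : 0 ≤ D) (hq : ε ≤ q) :
    sinh (q + D) * sinh ε ≤ sinh q * sinh (ε + D) := by
  have hdiff : sinh q * sinh (ε + D) - sinh (q + D) * sinh ε = sinh D * sinh (q - ε) := by
    simp only [sinh_add, sinh_sub]
    ring
  have hnonneg : 0 ≤ sinh D * sinh (q - ε) :=
    mul_nonneg (sinh_nonneg_iff.2 hD) (sinh_nonneg_iff.2 (sub_nonneg.2 hq))
  linarith

lemma sq_mul_sinh_le_of_le_add {D ε p q : ℝ} (hε : 0 < ε) (hD : 0 ≤ D) (hp : 0 ≤ p) (hq : ε ≤ q)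
    (hpq : p ≤ q + D) :
    p ^ 2 * sinh p ≤
      (ε + D) ^ 2 * sinh (ε + D) / (ε ^ 2 * sinh ε) * (q ^ 2 * sinh q) := by
  have : 0 < sinh ε := sinh_pos_iff.2 hε
  have : 0 ≤ sinh p := sinh_nonneg_iff.2 hp
  have hlinear : p * ε ≤ q * (ε + D) :=
    calc p * ε ≤ (q + D) * ε := by gcongr
      _ ≤ q * (ε + D) := by linarith [mul_le_mul_of_nonneg_right hq hD]
  have hsinh : sinh p * sinh ε ≤ sinh q * sinh (ε + D) :=
    calc sinh p * sinh ε ≤ sinh (q + D) * sinh ε := by gcongr; exact sinh_le_sinh.2 hpq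
      _ ≤ sinh q * sinh (ε + D) := sinh_add_mul_sinh_le hD hq
  rw [div_mul_eq_mul_div, le_div_iff₀ (by positivity)]
  calc p ^ 2 * sinh p * (ε ^ 2 * sinh ε) = (p * ε) ^ 2 * (sinh p * sinh ε) := by ring
    _ ≤ (q * (ε + D)) ^ 2 * (sinh q * sinh (ε + D)) := by gcongr
    _ = (ε + D) ^ 2 * sinh (ε + D) * (q ^ 2 * sinh q) := by ring

end RealEstimates

section Group

variable {x y : G}

lemma gMul_gInv_gMul (hx : 0 < x.2.2) : gMul x (gMul (gInv x) y) = y := by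
  ext <;> simp only [gMul, gInv] <;> field_simp <;> ring

lemma gMul_gMul_gInv (hy : 0 < y.2.2) : gMul (gMul x (gInv y)) y = x := by
  ext <;> simp only [gMul, gInv] <;> field_simp <;> ring

lemma gInv_gInv (hx : 0 < x.2.2) : gInv (gInv x) = x := by
  ext <;> simp only [gInv] <;> field_simp

lemma gInv_gMul_gInv (hx : 0 < x.2.2) (hy : 0 < y.2.2) :
    gInv (gMul x (gInv y)) = gMul y (gInv x) := by
  ext <;> simp only [gMul, gInv] <;> field_simp <;> ring

lemma gInv_gMul_gInv_gMul (hx : 0 < x.2.2) (hy : 0 < y.2.2) :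
    gMul (gInv (gMul x (gInv y))) x = y := by
  rw [gInv_gMul_gInv hx hy, gMul_gMul_gInv hx]

lemma gInv_snd_snd_pos (hx : 0 < x.2.2) : 0 < (gInv x).2.2 := one_div_pos.2 hx

lemma sqrt_deltaG (hx : 0 < x.2.2) : √(deltaG x) = x.2.2⁻¹ := by
  rw [deltaG, sqrt_inv, sqrt_sq hx.le]

end Group

section Metric

variable {x y : G}

/-- The space part of the point of the hyperboloid `X₀² - |X|² = 1` that corresponds to `x` when
`G` is regarded as the upper half-space; the time part `X₀` is `coshArg x`. -/
def hyperboloidSpace (x : G) : EuclideanSpace ℝ (Fin 3) :=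
  !₂[x.1 / x.2.2, x.2.1 / x.2.2, (x.2.2 ^ 2 + (x.1 ^ 2 + x.2.1 ^ 2) - 1) / (2 * x.2.2)]

lemma norm_hyperboloidSpace_sq (hx : 0 < x.2.2) :
    ‖hyperboloidSpace x‖ ^ 2 = coshArg x ^ 2 - 1 := by
  simp only [EuclideanSpace.norm_sq_eq, hyperboloidSpace, coshArg, Fin.sum_univ_three, norm_eq_abs,
    sq_abs, Matrix.cons_val_zero, Matrix.cons_val_one, Matrix.cons_val]
  field_simp
  ring

lemma coshArg_gInv_gMul (hx : 0 < x.2.2) (hy : 0 < y.2.2) :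
    coshArg (gMul (gInv x) y) =
      coshArg x * coshArg y - inner ℝ (hyperboloidSpace x) (hyperboloidSpace y) := by
  simp only [PiLp.inner_apply, hyperboloidSpace, coshArg, gMul, gInv, Fin.sum_univ_three,
    Matrix.cons_val_zero, Matrix.cons_val_one, Matrix.cons_val, RCLike.inner_apply,
    conj_trivial]
  field_simp
  ring

lemma cosh_log_le_coshArg (hx : 0 < x.2.2) : cosh (log x.2.2) ≤ coshArg x := by
  rw [cosh_log hx, coshArg]
  have : 0 ≤ x.2.2⁻¹ * (x.1 ^ 2 + x.2.1 ^ 2) := by positivity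
  linarith

lemma one_le_coshArg (hx : 0 < x.2.2) : 1 ≤ coshArg x :=
  (one_le_cosh _).trans (cosh_log_le_coshArg hx)

lemma cosh_rG (hx : 0 < x.2.2) : cosh (rG x) = coshArg x := cosh_arcosh (one_le_coshArg hx)

lemma rG_nonneg (hx : 0 < x.2.2) : 0 ≤ rG x := arcosh_nonneg (one_le_coshArg hx)

lemma norm_hyperboloidSpace (hx : 0 < x.2.2) : ‖hyperboloidSpace x‖ = sinh (rG x) := by
  rw [← sq_eq_sq₀ (norm_nonneg _) (sinh_nonneg_iff.2 (rG_nonneg hx)), norm_hyperboloidSpace_sq hx,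
    sinh_sq, cosh_rG hx]

lemma dG_le_rG_add_rG (hx : 0 < x.2.2) (hy : 0 < y.2.2) : dG x y ≤ rG x + rG y := by
  have hxy : 0 < (gMul (gInv x) y).2.2 := mul_pos (gInv_snd_snd_pos hx) hy
  have hcosh : cosh (dG x y) ≤ cosh (rG x + rG y) :=
    calc cosh (dG x y)
        = coshArg x * coshArg y - inner ℝ (hyperboloidSpace x) (hyperboloidSpace y) := by
          rw [dG, cosh_rG hxy, coshArg_gInv_gMul hx hy]
      _ ≤ coshArg x * coshArg y + ‖hyperboloidSpace x‖ * ‖hyperboloidSpace y‖ := by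
          linarith [neg_le_of_abs_le
            (abs_real_inner_le_norm (hyperboloidSpace x) (hyperboloidSpace y))]
      _ = cosh (rG x + rG y) := by
          rw [cosh_add, cosh_rG hx, cosh_rG hy, norm_hyperboloidSpace hx, norm_hyperboloidSpace hy]
  rwa [cosh_le_cosh, abs_of_nonneg (show 0 ≤ dG x y from rG_nonneg hxy),
    abs_of_nonneg (add_nonneg (rG_nonneg hx) (rG_nonneg hy))] at hcosh

lemma coshArg_gInv (hx : 0 < x.2.2) : coshArg (gInv x) = coshArg x := by
  simp only [coshArg, gInv]
  field_simp
  ring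

lemma rG_gInv (hx : 0 < x.2.2) : rG (gInv x) = rG x := by
  rw [rG, rG, coshArg_gInv hx]

lemma rG_gMul_le (hx : 0 < x.2.2) (hy : 0 < y.2.2) : rG (gMul x y) ≤ rG x + rG y := by
  have htriangle := dG_le_rG_add_rG (gInv_snd_snd_pos hx) hy
  rwa [dG, gInv_gInv hx, rG_gInv hx] at htriangle

lemma dG_gE_left (x : G) : dG gE x = rG x := by
  simp [dG, gMul, gInv, gE]

lemma abs_log_le_rG (hx : 0 < x.2.2) : |log x.2.2| ≤ rG x := by
  have hcosh := cosh_log_le_coshArg hx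
  rwa [← cosh_rG hx, cosh_le_cosh, abs_of_nonneg (rG_nonneg hx)] at hcosh

lemma normG_le_sinh_rG (hx : 0 < x.2.2) : normG x ≤ sinh (rG x) := by
  rw [normG, sqrt_le_left (sinh_nonneg_iff.2 (rG_nonneg hx)), sinh_sq, cosh_rG hx]
  have hsq : coshArg x ^ 2 - 1 - (x.1 ^ 2 + x.2.1 ^ 2) = (coshArg x - x.2.2) ^ 2 := by
    simp only [coshArg]
    field_simp
    ring
  linarith [sq_nonneg (coshArg x - x.2.2)]

lemma measurable_rG : Measurable rG := by
  unfold rG coshArg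
  fun_prop

end Metric

section Ball

variable {D : ℝ} {x y : G}

/-- The closed ball of radius `D` about the identity, for the metric `dG`. The condition `0 < a`
has to be imposed since `G` is encoded as the whole of `ℝ × ℝ × ℝ`. -/
def ballG (D : ℝ) : Set G := {x | 0 < x.2.2 ∧ rG x ≤ D}

lemma measurableSet_ballG (D : ℝ) : MeasurableSet (ballG D) :=
  (measurableSet_lt measurable_const measurable_snd.snd).inter
    (measurableSet_le measurable_rG measurable_const)

lemma gInv_mem_ballG (hx : x ∈ ballG D) : gInv x ∈ ballG D :=
  ⟨gInv_snd_snd_pos hx.1, (rG_gInv hx.1).trans_le hx.2⟩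

lemma ballG_subset_box (D : ℝ) :
    ballG D ⊆ Icc (-sinh D) (sinh D) ×ˢ Icc (-sinh D) (sinh D) ×ˢ Icc (exp (-D)) (exp D) := by
  rintro x ⟨hpos, hr⟩
  have hnorm : normG x ≤ sinh D := (normG_le_sinh_rG hpos).trans (sinh_le_sinh.2 hr)
  have hfst : |x.1| ≤ normG x := abs_le_sqrt (by linarith [sq_nonneg x.2.1])
  have hsnd : |x.2.1| ≤ normG x := abs_le_sqrt (by linarith [sq_nonneg x.1])
  have hlog := abs_le.1 ((abs_log_le_rG hpos).trans hr)
  exact ⟨abs_le.1 (hfst.trans hnorm), abs_le.1 (hsnd.trans hnorm),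
    (le_log_iff_exp_le hpos).1 hlog.1, (log_le_iff_le_exp hpos).1 hlog.2⟩

lemma sqrt_deltaG_le_of_mem_ballG (hx : x ∈ ballG D) (hy : 0 < y.2.2) :
    √(deltaG y) ≤ exp D * √(deltaG (gMul x y)) := by
  have hxD : x.2.2 ≤ exp D := (ballG_subset_box D hx).2.2.2
  have hx0 := hx.1
  rw [sqrt_deltaG hy, sqrt_deltaG (mul_pos hx0 hy)]
  calc y.2.2⁻¹ = x.2.2 * (gMul x y).2.2⁻¹ := by simp only [gMul]; field_simp
    _ ≤ exp D * (gMul x y).2.2⁻¹ := by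
        gcongr
        exact inv_nonneg.2 (mul_pos hx0 hy).le

end Ball

section HaarMeasure

/-- The density `a⁻¹` on `a > 0`, extended by `0`, of the Haar measure of `ℝ⁺`. -/
def mulHaarDensity (a : ℝ) : ℝ≥0∞ := ENNReal.ofReal (if 0 < a then a⁻¹ else 0)

/-- The Haar measure `a⁻¹ da` of the multiplicative group `ℝ⁺`, as a measure on `ℝ`. -/
def mulHaar : Measure ℝ := volume.withDensity mulHaarDensity

@[fun_prop]
lemma measurable_mulHaarDensity : Measurable mulHaarDensity :=
  (Measurable.ite measurableSet_Ioi measurable_inv measurable_const).ennreal_ofReal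

lemma ofReal_mul_mulHaarDensity_mul {s : ℝ} (hs : 0 < s) (a : ℝ) :
    ENNReal.ofReal s * mulHaarDensity (a * s) = mulHaarDensity a := by
  simp only [mulHaarDensity, ← ENNReal.ofReal_mul hs.le, mul_pos_iff_of_pos_right hs]
  split_ifs
  · field_simp
  · rw [mul_zero]

instance : SFinite mulHaar := by
  unfold mulHaar
  infer_instance

lemma measurePreserving_mul_right_mulHaar {s : ℝ} (hs : 0 < s) :
    MeasurePreserving (· * s) mulHaar mulHaar := by
  have hs_inv : ENNReal.ofReal s * ENNReal.ofReal |s⁻¹| = 1 := by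
    rw [abs_of_pos (inv_pos.2 hs), ← ENNReal.ofReal_mul hs.le, mul_inv_cancel₀ hs.ne',
      ENNReal.ofReal_one]
  refine ⟨measurable_mul_const s, Measure.ext fun S hS => ?_⟩
  have hS' : MeasurableSet ((· * s) ⁻¹' S) := measurable_mul_const s hS
  calc Measure.map (· * s) mulHaar S = ∫⁻ a in (· * s) ⁻¹' S, mulHaarDensity a := by
        rw [Measure.map_apply (measurable_mul_const s) hS, mulHaar, withDensity_apply _ hS']
    _ = ∫⁻ a in (· * s) ⁻¹' S, ENNReal.ofReal s * mulHaarDensity (a * s) :=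
        lintegral_congr fun a => (ofReal_mul_mulHaarDensity_mul hs a).symm
    _ = ENNReal.ofReal s * ∫⁻ a in S, mulHaarDensity a ∂(Measure.map (· * s) volume) := by
        rw [lintegral_const_mul' _ _ ENNReal.ofReal_ne_top,
          setLIntegral_map hS measurable_mulHaarDensity (measurable_mul_const s)]
    _ = ∫⁻ a in S, mulHaarDensity a := by
        rw [Real.map_volume_mul_right hs.ne', Measure.restrict_smul, lintegral_smul_measure,
          smul_eq_mul, ← mul_assoc, hs_inv, one_mul]
    _ = mulHaar S := (withDensity_apply _ hS).symm

lemma mulHaar_Icc_lt_top {a : ℝ} (ha : 0 < a) (b : ℝ) : mulHaar (Icc a b) < ⊤ := by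
  rw [mulHaar, withDensity_apply _ measurableSet_Icc]
  refine setLIntegral_lt_top_of_le_nnreal measure_Icc_lt_top.ne ⟨(a⁻¹).toNNReal, fun s hs => ?_⟩
  refine ENNReal.ofReal_le_ofReal ?_
  rw [if_pos (ha.trans_le hs.1)]
  exact inv_anti₀ ha hs.1

lemma ρG_eq_prod_s15 : ρG = (volume : Measure ℝ).prod ((volume : Measure ℝ).prod mulHaar) := by
  rw [mulHaar, prod_withDensity_right (by fun_prop), prod_withDensity_right (by fun_prop)]
  rfl

lemma measurePreserving_skew_add {β : Type*} [MeasurableSpace β] {ν : Measure β} [SFinite ν]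
    {T : β → β} (hT : MeasurePreserving T ν ν) {c : β → ℝ} (hc : Measurable c) :
    MeasurePreserving (fun p : ℝ × β => (p.1 + c p.2, T p.2))
      ((volume : Measure ℝ).prod ν) ((volume : Measure ℝ).prod ν) :=
  have hskew : MeasurePreserving (fun p : β × ℝ => (T p.1, p.2 + c p.1)) (ν.prod volume)
      (ν.prod volume) :=
    hT.skew_product (g := fun b s => s + c b) (by fun_prop)
      (ae_of_all _ fun b => map_add_right_eq_self volume (c b))
  Measure.measurePreserving_swap.comp (hskew.comp Measure.measurePreserving_swap)

lemma measurePreserving_gMul_right {z : G} (hz : 0 < z.2.2) :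
    MeasurePreserving (gMul · z) ρG ρG := by
  rw [ρG_eq_prod_s15]
  exact measurePreserving_skew_add (c := fun q => q.2 * z.1)
    (measurePreserving_skew_add (c := fun a => a * z.2.1) (measurePreserving_mul_right_mulHaar hz)
      (by fun_prop)) (by fun_prop)

lemma ρG_ballG_lt_top (D : ℝ) : ρG (ballG D) < ⊤ := by
  refine (measure_mono (ballG_subset_box D)).trans_lt ?_
  rw [ρG_eq_prod_s15, Measure.prod_prod, Measure.prod_prod]
  exact ENNReal.mul_lt_top measure_Icc_lt_top
    (ENNReal.mul_lt_top measure_Icc_lt_top (mulHaar_Icc_lt_top (exp_pos _) _))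

end HaarMeasure

section HeatKernel

variable {D ε K t : ℝ} {w x y : G}

lemma abs_heatK_le (ht : 0 < t) (hr : 0 < rG y) :
    |heatK t y| ≤ √(deltaG y) / (rG y ^ 2 * sinh (rG y)) := by
  set r := rG y
  have : 0 < sinh r := sinh_pos_iff.2 hr
  rw [heatK, if_neg hr.ne', abs_of_nonneg (by positivity)]
  calc (8 * π ^ ((3 : ℝ) / 2))⁻¹ * √(deltaG y) * (r / sinh r) * t ^ (-(3 : ℝ) / 2)
        * exp (-(r ^ 2) / (4 * t))
      = √(deltaG y) * (r / sinh r) *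
        ((8 * π ^ ((3 : ℝ) / 2))⁻¹ * t ^ (-(3 : ℝ) / 2) * exp (-(r ^ 2) / (4 * t))) := by ring
    _ ≤ √(deltaG y) * (r / sinh r) * (r ^ 3)⁻¹ := by
        gcongr
        exact gaussian_three_le_inv_cube ht hr
    _ = √(deltaG y) / (r ^ 2 * sinh r) := by field_simp

lemma abs_heatK_le_of_mem_ballG (hε : 0 < ε) (ht : 0 < t) (hw : w ∈ ballG D) (hy : 0 < y.2.2)
    (hεy : ε ≤ rG y) (hr : 0 < rG (gMul w y)) :
    |heatK t y| ≤ exp D * ((ε + D) ^ 2 * sinh (ε + D) / (ε ^ 2 * sinh ε)) *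
      (√(deltaG (gMul w y)) / (rG (gMul w y) ^ 2 * sinh (rG (gMul w y)))) := by
  set A := (ε + D) ^ 2 * sinh (ε + D) / (ε ^ 2 * sinh ε)
  have hry : 0 < rG y := hε.trans_le hεy
  have : 0 < sinh (rG y) := sinh_pos_iff.2 hry
  have : 0 < sinh (rG (gMul w y)) := sinh_pos_iff.2 hr
  have hradius : rG (gMul w y) ≤ rG y + D := by linarith [rG_gMul_le hw.1 hy, hw.2]
  have hcompare : rG (gMul w y) ^ 2 * sinh (rG (gMul w y)) ≤ A * (rG y ^ 2 * sinh (rG y)) :=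
    sq_mul_sinh_le_of_le_add hε ((rG_nonneg hw.1).trans hw.2) hr.le hεy hradius
  calc |heatK t y| ≤ √(deltaG y) / (rG y ^ 2 * sinh (rG y)) := abs_heatK_le ht hry
    _ ≤ exp D * √(deltaG (gMul w y)) / (rG y ^ 2 * sinh (rG y)) := by
        gcongr
        exact sqrt_deltaG_le_of_mem_ballG hw hy
    _ = exp D * √(deltaG (gMul w y)) * (rG y ^ 2 * sinh (rG y))⁻¹ := div_eq_mul_inv _ _
    _ ≤ exp D * √(deltaG (gMul w y)) * (A / (rG (gMul w y) ^ 2 * sinh (rG (gMul w y)))) := by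
        gcongr
        rwa [inv_eq_one_div, div_le_div_iff₀ (by positivity) (by positivity), one_mul]
    _ = _ := by ring

lemma abs_convHeat_le {f : G → ℝ} (hf : Function.support f ⊆ ballG D) (hx : 0 < x.2.2)
    (hbound : ∀ y, 0 < y.2.2 → |f (gMul x (gInv y)) * heatK t y| ≤ K) :
    |convHeat f t x| ≤ ρG.real (ballG D) * K := by
  have hK : 0 ≤ K := (abs_nonneg _).trans (hbound gE one_pos)
  set T : Set G := (gMul · (gInv x)) ⁻¹' ballG D
  have htranslate := measurePreserving_gMul_right (gInv_snd_snd_pos hx)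
  have hT : MeasurableSet T := htranslate.measurable (measurableSet_ballG D)
  have hρT : ρG T = ρG (ballG D) :=
    htranslate.measure_preimage (measurableSet_ballG D).nullMeasurableSet
  have hpointwise (y : G) :
      ‖f (gMul x (gInv y)) * heatK t y‖ ≤ T.indicator (fun _ => K) y := by
    by_cases hfy : f (gMul x (gInv y)) = 0
    · rw [hfy, zero_mul, norm_zero]
      exact indicator_nonneg (fun _ _ => hK) y
    · have hmem : gMul x (gInv y) ∈ ballG D := hf hfy
      have hy : 0 < y.2.2 := one_div_pos.1 ((mul_pos_iff_of_pos_left hx).1 hmem.1)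
      have hyT : y ∈ T := by
        rw [mem_preimage, ← gInv_gMul_gInv hx hy]
        exact gInv_mem_ballG hmem
      rw [indicator_of_mem hyT]
      exact hbound y hy
  have hintegrable : Integrable (T.indicator fun _ => K) ρG :=
    (integrable_indicator_iff hT).2 (integrableOn_const (hρT.trans_lt (ρG_ballG_lt_top D)).ne)
  have hle := norm_integral_le_of_norm_le hintegrable (ae_of_all _ hpointwise)
  rwa [integral_indicator_const _ hT, smul_eq_mul, measureReal_def, hρT] at hle

end HeatKernel

theorem maxHeat_indicator_R0_bound_general {D ε : ℝ} (hD : 0 ≤ D) (hε : 0 < ε) :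
    ∃ C > (0 : ℝ), ∀ R ⊆ ballG D, ∀ x : G, 0 < x.2.2 → 0 < rG x → (∀ w ∈ R, ε ≤ dG w x) →
      maxHeat (R.indicator fun _ => (1 : ℝ)) x ≤
        ENNReal.ofReal (C * √(deltaG x) / (rG x ^ 2 * sinh (rG x))) := by
  set A := exp D * ((ε + D) ^ 2 * sinh (ε + D) / (ε ^ 2 * sinh ε))
  have : 0 < sinh ε := sinh_pos_iff.2 hε
  have : 0 < sinh (ε + D) := sinh_pos_iff.2 (by positivity)
  have : 0 < A := by positivity
  refine ⟨(ρG.real (ballG D) + 1) * A, by positivity, fun R hR x hx hr hdist =>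
    iSup₂_le fun t ht => ENNReal.ofReal_le_ofReal ?_⟩
  have : 0 < sinh (rG x) := sinh_pos_iff.2 hr
  set K := √(deltaG x) / (rG x ^ 2 * sinh (rG x))
  have : 0 ≤ K := by positivity
  have hbound (y : G) (hy : 0 < y.2.2) :
      |R.indicator (fun _ => (1 : ℝ)) (gMul x (gInv y)) * heatK t y| ≤ A * K := by
    by_cases hw : gMul x (gInv y) ∈ R
    · have hεy : ε ≤ rG y := by
        simpa only [dG, gInv_gMul_gInv_gMul hx hy] using hdist _ hw
      have hheat := abs_heatK_le_of_mem_ballG hε ht (hR hw) hy hεy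
      rw [gMul_gMul_gInv hy] at hheat
      rw [indicator_of_mem hw, one_mul]
      exact hheat hr
    · rw [indicator_of_notMem hw, zero_mul, abs_zero]
      positivity
  calc |convHeat (R.indicator fun _ => (1 : ℝ)) t x| ≤ ρG.real (ballG D) * (A * K) :=
        abs_convHeat_le (support_indicator_subset.trans hR) hx hbound
    _ ≤ (ρG.real (ballG D) + 1) * (A * K) := by
        gcongr
        linarith
    _ = (ρG.real (ballG D) + 1) * A * √(deltaG x) / (rG x ^ 2 * sinh (rG x)) := by ring

section Rectangle

variable {w x y : G}

lemma R0set_subset_ballG : R0set ⊆ ballG (arcosh (2 * exp 1)) := by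
  rintro ⟨x₁, x₂, a⟩ ⟨hx₁, hx₂, ha⟩
  have hpos : 0 < a := (exp_pos _).trans_le ha.1
  have hinv : a⁻¹ ≤ exp 1 := by simpa only [exp_neg, inv_inv] using inv_anti₀ (exp_pos _) ha.1
  have hsq : x₁ ^ 2 + x₂ ^ 2 ≤ 2 := by
    linarith [(sq_le_one_iff_abs_le_one x₁).2 (abs_le.2 hx₁),
      (sq_le_one_iff_abs_le_one x₂).2 (abs_le.2 hx₂)]
  have hcosh : coshArg (x₁, x₂, a) ≤ 2 * exp 1 :=
    calc (a + a⁻¹ + a⁻¹ * (x₁ ^ 2 + x₂ ^ 2)) / 2 ≤ (exp 1 + exp 1 + exp 1 * 2) / 2 := by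
          gcongr
          exact ha.2
      _ = 2 * exp 1 := by ring
  have hcosh_pos : 0 < coshArg (x₁, x₂, a) := zero_lt_one.trans_le (one_le_coshArg hpos)
  exact ⟨hpos, (arcosh_le_arcosh hcosh_pos (by positivity)).2 hcosh⟩

lemma gMul_mem_twoR0set (hw : w ∈ R0set) (hy : y ∈ ballG (arsinh (exp (-1)))) :
    gMul w y ∈ twoR0set := by
  have harsinh : arsinh (exp (-1)) ≤ 1 := by
    rw [← arsinh_sinh 1, arsinh_le_arsinh]
    exact (exp_le_one_iff.2 (by norm_num)).trans (self_le_sinh_iff.2 zero_le_one)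
  obtain ⟨hw₁, hw₂, hw₃⟩ := hw
  obtain ⟨hy₁, hy₂, hy₃⟩ := ballG_subset_box _ hy
  rw [sinh_arsinh] at hy₁ hy₂
  have hw_pos : 0 < w.2.2 := (exp_pos _).trans_le hw₃.1
  have hshift {s : ℝ} (hs : s ∈ Icc (-exp (-1)) (exp (-1))) : |w.2.2 * s| ≤ 1 :=
    calc |w.2.2 * s| = w.2.2 * |s| := by rw [abs_mul, abs_of_pos hw_pos]
      _ ≤ exp 1 * exp (-1) := by
          gcongr
          exacts [hw₃.2, abs_le.2 hs]
      _ = 1 := by rw [← exp_add, add_neg_cancel, exp_zero]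
  have hshift₁ := abs_le.1 (hshift hy₁)
  have hshift₂ := abs_le.1 (hshift hy₂)
  have hscale : w.2.2 * y.2.2 ∈ Icc (exp (-2)) (exp 2) := by
    have hy_lower : exp (-1) ≤ y.2.2 := (exp_le_exp.2 (neg_le_neg harsinh)).trans hy₃.1
    have hy_upper : y.2.2 ≤ exp 1 := hy₃.2.trans (exp_le_exp.2 harsinh)
    rw [show (-2 : ℝ) = -1 + -1 by norm_num, show (2 : ℝ) = 1 + 1 by norm_num, exp_add, exp_add]
    exact ⟨by gcongr; exact hw₃.1, by gcongr; exacts [by linarith [exp_pos (-1)], hw₃.2]⟩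
  exact ⟨⟨by simp only [gMul]; linarith [hw₁.1], by simp only [gMul]; linarith [hw₁.2]⟩,
    ⟨by simp only [gMul]; linarith [hw₂.1], by simp only [gMul]; linarith [hw₂.2]⟩, hscale⟩

lemma arsinh_lt_dG (hw : w ∈ R0set) (hx : 0 < x.2.2) (hx2 : x ∉ twoR0set) :
    arsinh (exp (-1)) < dG w x := by
  have hw_pos : 0 < w.2.2 := (R0set_subset_ballG hw).1
  by_contra! hle
  refine hx2 ?_
  rw [← gMul_gInv_gMul hw_pos (y := x)]
  exact gMul_mem_twoR0set hw ⟨mul_pos (gInv_snd_snd_pos hw_pos) hx, hle⟩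

lemma gE_mem_R0set : gE ∈ R0set := by
  simp [gE, R0set]

end Rectangle

theorem maxHeat_indicator_R0_bound :
    ∃ C > (0 : ℝ), ∀ x : G, 0 < x.2.2 → x ∉ twoR0set →
      maxHeat (R0set.indicator fun _ => (1 : ℝ)) x ≤
        ENNReal.ofReal (C * Real.sqrt (deltaG x) / (rG x ^ 2 * Real.sinh (rG x))) := by
  have hε : 0 < arsinh (exp (-1)) := arsinh_pos_iff.2 (exp_pos _)
  have hD : 0 ≤ arcosh (2 * exp 1) := arcosh_nonneg (by linarith [add_one_le_exp 1])
  obtain ⟨C, hC, hbound⟩ := maxHeat_indicator_R0_bound_general hD hε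
  refine ⟨C, hC, fun x hx hx2 => hbound R0set R0set_subset_ballG x hx ?_ fun w hw =>
    (arsinh_lt_dG hw hx hx2).le⟩
  exact dG_gE_left x ▸ hε.trans (arsinh_lt_dG gE_mem_R0set hx hx2)
end
end
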